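/- Let (Ω, F, P) be a probability space with a filtration (F_t)_{t∈[0,T]}, and let (G_t)_{t∈[0,T]} be another filtration with G_t ⊆ F_t for every t. Let W be an (F_t)-martingale with integrable values, let h: [0,T] × Ω → ℝ be a bounded progressively measurable process, and let ĥ: [0,T] × Ω → ℝ be a bounded (G_t)-progressively measurable process such that for almost every r ∈ [0,T], ĥ_r = E[h_r | G_r] almost surely. Define ν_t = W_t + ∫_0^t (h_r − ĥ_r) dr and assume ν_t is G_t-measurable for every t. Then for all 0 ≤ s ≤ t ≤ T, E[ν_t − ν_s | G_s] = 0 almost surely; that is, ν is a martingale with respect to the filtration (G_t). -/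

import Mathlib

open MeasureTheory

/-!
Write `ν_t - ν_s = (W_t - W_s) + ∫_s^t (h_r - ĥ_r) dr`. The first summand has zero conditional
expectation given `G_s` by the martingale property of `W` and the tower property along
`G_s ≤ F_s`. For the second, `condExp_intervalIntegral_eq_zero` interchanges `∫_s^t` with the
integral over a set `A ∈ G_s` by Fubini, and the inner integral `∫_A (h_r - ĥ_r) dP` vanishes for
almost every `r ∈ [s, t]`, because `A ∈ G_r` and `ĥ_r = E[h_r | G_r]`.
Joint measurability of `h - ĥ` is available only on `(-∞, T] × Ω`, so the processes are frozen at
time `T` to obtain jointly measurable processes on `ℝ × Ω`.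
-/

/-- A progressively measurable process frozen at time `T` is jointly measurable on `ℝ × Ω`. -/
lemma stronglyMeasurable_uncurry_min
    {Ω : Type*} [m0 : MeasurableSpace Ω] (F : Filtration ℝ m0) (h : ℝ → Ω → ℝ)
    (hprog : IsStronglyProgressive F h) (T : ℝ) :
    StronglyMeasurable (fun p : ℝ × Ω => h (min p.1 T) p.2) := by
  have h1 : StronglyMeasurable (fun p : Set.Iic T × Ω => h p.1 p.2) :=
    (hprog T).mono (sup_le_sup le_rfl (MeasurableSpace.comap_mono (F.le T)))
  have h2 : Measurable
      (fun p : ℝ × Ω => ((⟨min p.1 T, Set.mem_Iic.2 (min_le_right _ _)⟩ : Set.Iic T), p.2)) :=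
    ((measurable_fst.min measurable_const).subtype_mk).prodMk measurable_snd
  exact h1.comp_measurable h2

/-- Fubini for conditional expectations: a time integral of a bounded jointly measurable process
has zero conditional expectation if almost every time section integrates to zero over every set
of the conditioning σ-algebra. -/
lemma condExp_intervalIntegral_eq_zero
    {Ω : Type*} {m m0 : MeasurableSpace Ω} (hm : m ≤ m0) (P : Measure Ω) [IsProbabilityMeasure P]
    (f : ℝ → Ω → ℝ) (hf : StronglyMeasurable (fun p : ℝ × Ω => f p.1 p.2))
    (C : ℝ) (hC : ∀ r ω, |f r ω| ≤ C) (s t : ℝ) (hst : s ≤ t)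
    (hzero : ∀ᵐ r ∂(volume.restrict (Set.Ioc s t)),
      ∀ A, MeasurableSet[m] A → ∫ ω in A, f r ω ∂P = 0) :
    Integrable (fun ω => ∫ r in s..t, f r ω) P ∧
      P[(fun ω => ∫ r in s..t, f r ω) | m] =ᵐ[P] 0 := by
  have hint : ∀ Q : Measure Ω, IsFiniteMeasure Q →
      Integrable (fun p : ℝ × Ω => f p.1 p.2) ((volume.restrict (Set.Ioc s t)).prod Q) := by
    intro Q _
    exact Integrable.of_bound hf.aestronglyMeasurable C
      (Filter.Eventually.of_forall fun p => hC p.1 p.2)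
  have hI : Integrable (fun ω => ∫ r in s..t, f r ω) P := by
    simp only [intervalIntegral.integral_of_le hst]
    exact (hint P inferInstance).integral_prod_right
  refine ⟨hI, Filter.EventuallyEq.symm ?_⟩
  refine ae_eq_condExp_of_forall_setIntegral_eq hm hI
    (fun A _ _ => integrableOn_zero) (fun A hA _ => ?_) aestronglyMeasurable_zero
  simp only [intervalIntegral.integral_of_le hst]
  rw [← integral_integral_swap (hint (P.restrict A) inferInstance)]
  rw [integral_eq_zero_of_ae (hzero.mono fun r hr => hr A hA)]
  simp

/-- martingale property of the innovation process
`ν_t = W_t + ∫_0^t (h_r − ĥ_r) dr` with respect to the observation filtration `G`. -/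
theorem innovation_process_martingale
    {Ω : Type*} [m0 : MeasurableSpace Ω] (P : Measure Ω) [IsProbabilityMeasure P]
    (T : ℝ) (hT : 0 < T)
    (F G : Filtration ℝ m0) (hGF : ∀ t, G t ≤ F t)
    (W : ℝ → Ω → ℝ) (hW : Martingale W F P) (hWint : ∀ t, Integrable (W t) P)
    (h hhat : ℝ → Ω → ℝ)
    (hprog : ProgMeasurable F h) (hhatprog : ProgMeasurable G hhat)
    (Ch : ℝ) (hbdd : ∀ t ω, |h t ω| ≤ Ch)
    (Chat : ℝ) (hhatbdd : ∀ t ω, |hhat t ω| ≤ Chat)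
    (hver : ∀ᵐ r ∂(volume.restrict (Set.Icc (0 : ℝ) T)),
      hhat r =ᵐ[P] P[h r | G r])
    (ν : ℝ → Ω → ℝ)
    (hν : ∀ t ω, ν t ω = W t ω + ∫ r in (0 : ℝ)..t, (h r ω - hhat r ω))
    (hνmeas : ∀ t, Measurable[G t] (ν t)) :
    ∀ s t : ℝ, 0 ≤ s → s ≤ t → t ≤ T →
      P[(fun ω => ν t ω - ν s ω) | G s] =ᵐ[P] 0 := by
  intro s t hs hst htT
  have hhm := stronglyMeasurable_uncurry_min F h hprog T
  have hhatm := stronglyMeasurable_uncurry_min G hhat hhatprog T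
  -- `f` is the integrand frozen at time `T`, which agrees with it on `(-∞, T]`.
  let f : ℝ → Ω → ℝ := fun r ω => h (min r T) ω - hhat (min r T) ω
  have hfm : StronglyMeasurable (fun p : ℝ × Ω => f p.1 p.2) := hhm.sub hhatm
  have hfC : ∀ r ω, |f r ω| ≤ Ch + Chat := fun r ω =>
    (abs_sub _ _).trans (add_le_add (hbdd _ _) (hhatbdd _ _))
  have hfint : ∀ ω a b, IntervalIntegrable (fun r => f r ω) volume a b := by
    intro ω a b
    have hmeas : StronglyMeasurable (fun r => f r ω) :=
      hfm.comp_measurable (measurable_id.prodMk measurable_const)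
    exact (intervalIntegrable_const (c := Ch + Chat)).mono_fun hmeas.aestronglyMeasurable
      (Filter.Eventually.of_forall fun r => (hfC r ω).trans (le_abs_self _))
  have hswap : ∀ ω u, 0 ≤ u → u ≤ T →
      ∫ r in (0 : ℝ)..u, (h r ω - hhat r ω) = ∫ r in (0 : ℝ)..u, f r ω := by
    intro ω u hu huT
    refine intervalIntegral.integral_congr fun r hr => ?_
    rw [Set.uIcc_of_le hu] at hr
    simp only [f, min_eq_left (hr.2.trans huT)]
  have hdecomp : (fun ω => ν t ω - ν s ω)
      = (W t - W s) + fun ω => ∫ r in s..t, f r ω := by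
    funext ω
    simp only [hν, Pi.add_apply, Pi.sub_apply]
    rw [hswap ω t (hs.trans hst) htT, hswap ω s hs (hst.trans htT),
      ← intervalIntegral.integral_interval_sub_left (hfint ω 0 t) (hfint ω 0 s)]
    ring
  have hzero : ∀ᵐ r ∂(volume.restrict (Set.Ioc s t)),
      ∀ A, MeasurableSet[G s] A → ∫ ω in A, f r ω ∂P = 0 := by
    have hsub : Set.Ioc s t ⊆ Set.Icc 0 T := fun r hr =>
      ⟨hs.trans hr.1.le, hr.2.trans htT⟩
    filter_upwards [ae_restrict_of_ae_restrict_of_subset hsub hver,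
      ae_restrict_mem measurableSet_Ioc] with r hr hrmem A hA
    have hrT : min r T = r := min_eq_left (hrmem.2.trans htT)
    have hAr : MeasurableSet[G r] A := G.mono hrmem.1.le A hA
    have hhr : Integrable (h r) P := by
      refine Integrable.of_bound (C := Ch) ?_ (Filter.Eventually.of_forall fun ω => hbdd r ω)
      have := hhm.comp_measurable (measurable_prodMk_left (x := r))
      simp only [Function.comp_def, hrT] at this
      exact this.aestronglyMeasurable
    have hhatr : Integrable (hhat r) P := integrable_condExp.congr hr.symm
    simp only [f, hrT]
    rw [integral_sub hhr.integrableOn hhatr.integrableOn,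
      integral_congr_ae (ae_restrict_of_ae hr), setIntegral_condExp (G.le r) hhr hAr, sub_self]
  obtain ⟨hDint, hD⟩ :=
    condExp_intervalIntegral_eq_zero (G.le s) P f hfm _ hfC s t hst hzero
  have hWzero : P[W t - W s | G s] =ᵐ[P] 0 := by
    have h1 : P[W t - W s | F s] =ᵐ[P] 0 := by
      filter_upwards [condExp_sub (hWint t) (hWint s) (F s), hW.condExp_ae_eq hst,
        hW.condExp_ae_eq (le_refl s)] with ω e1 e2 e3
      simp [e1, e2, e3]
    calc P[W t - W s | G s]
        =ᵐ[P] P[P[W t - W s | F s] | G s] :=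
          (condExp_condExp_of_le (hGF s) (F.le s)).symm
      _ =ᵐ[P] P[(0 : Ω → ℝ) | G s] := condExp_congr_ae h1
      _ =ᵐ[P] 0 := by rw [condExp_zero]
  rw [hdecomp]
  filter_upwards [condExp_add ((hWint t).sub (hWint s)) hDint (G s), hWzero, hD] with ω e1 e2 e3
  simp [e1, e2, e3]
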